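/- Let [ω_1, …, ω_p] be a global orbit pattern realized by some function in F_N, let j be an index with ω_j ≥ 2, and let h be an integer with 1 ≤ h ≤ ω_j − 1. Then the number of f ∈ F_N with gop(f) = [ω_1, …, ω_j, …, ω_p] equals (h + ω_{j+1} + ⋯ + ω_p) times the number of f ∈ F_N with gop(f) = [ω_1, …, ω_{j−1}, ω_j − h, h, ω_{j+1}, …, ω_p]. -/

import Mathlib

/-!
A self-map of `Fin N` is a rooted forest, whose roots are the periodic points, together with a
permutation of the roots. Represent each tree by its least element. A component is a union of trees
permuted cyclically, so the pattern of the map is the list of cycle lengths of a permutation of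
these least elements, ordered by the least elements of the cycles.

In a uniformly random permutation of `n` points the cycle of the least point has uniformly
distributed length in `{1, …, n}`, and the rest is a uniformly random permutation of the remaining
points. Hence a pattern `[ω_1, …, ω_p]` of sum `n` is taken by `n! / ∏ᵢ (ω_i + ⋯ + ω_p)`
permutations of `n` points. Summing over the forests, the number of self-maps with this pattern is
`1 / ∏ᵢ (ω_i + ⋯ + ω_p)` times a number depending only on `n`. Splitting an entry into two keeps the
sum of the pattern and adds one factor to the product.
-/

open scoped Classical

/-- Two points are in the same component of `X_N` under `f`:
`x ~ y` iff some forward iterate of `x` equals some forward iterate of `y`. -/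
def sameComp {N : ℕ} (f : Fin N → Fin N) (x y : Fin N) : Prop :=
  ∃ k l : ℕ, f^[k] x = f^[l] y

/-- The order `ω(x, f)` of a point `x`: the length of the periodic cycle contained in
the component of `x`, i.e. the least `p > 0` such that the orbit of `x` is eventually
`p`-periodic. -/
noncomputable def gopOrd {N : ℕ} (f : Fin N → Fin N) (x : Fin N) : ℕ :=
  sInf {p : ℕ | 0 < p ∧ ∃ K : ℕ, f^[K + p] x = f^[K] x}

/-- The global orbit pattern of `f`: the list of orders of the least elements of the
components of `X_N` under `f`, listed in increasing order of those least elements. -/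
noncomputable def gop {N : ℕ} (f : Fin N → Fin N) : List ℕ :=
  ((Finset.univ.filter (fun x : Fin N => ∀ y : Fin N, sameComp f x y → x ≤ y)).sort (· ≤ ·)).map
    (gopOrd f)

section Permutations

open Equiv Function

variable {α : Type*}

theorem sameCycle_map {β : Type*} {σ : Perm α} {τ : Perm β} (π : α → β)
    (hπ : ∀ x, τ.SameCycle (π x) (π (σ x))) {x y : α} (h : σ.SameCycle x y) :
    τ.SameCycle (π x) (π y) := by
  obtain ⟨i, rfl⟩ := h
  induction i with
  | zero => rfl
  | succ i ih =>
    rw [add_comm, zpow_add, zpow_one, Perm.mul_apply]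
    exact ih.trans (hπ _)
  | pred i ih =>
    refine ih.trans (Perm.SameCycle.symm ?_)
    simpa [sub_eq_neg_add, zpow_add] using hπ ((σ ^ (-(i : ℤ) - 1)) x)

theorem minimalPeriod_eq_card_sameCycle [Fintype α] (σ : Perm α) (x : α) :
    minimalPeriod σ x = Finset.card {y | σ.SameCycle x y} := by
  have hcycle : σ.IsCycleOn ({y | σ.SameCycle x y} : Finset α) := by
    refine ⟨σ.bijOn fun y => by simp, fun y hy z hz => ?_⟩
    simp only [Finset.coe_filter, Finset.mem_univ, true_and, Set.mem_ofPred_eq] at hy hz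
    exact hy.symm.trans hz
  refine Nat.dvd_right_iff_eq.1 fun n => ?_
  rw [← hcycle.pow_apply_eq (a := x) (by simp [Perm.SameCycle.rfl]),
    ← isPeriodicPt_iff_minimalPeriod_dvd, Perm.coe_pow]
  rfl

/-- `τ * swap a b` is `τ` with its fixed point `b` inserted into a cycle, right after `a`. -/
theorem sameCycle_mul_swap_iff [DecidableEq α] {τ : Perm α} {a b x y : α} (hb : τ b = b)
    (hab : a ≠ b) (hx : x ≠ b) (hy : y ≠ b) : (τ * swap a b).SameCycle x y ↔ τ.SameCycle x y := by
  have ha : (τ * swap a b) a = b := by simp [hb]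
  have hb' : (τ * swap a b) b = τ a := by simp
  have hne : ∀ z, z ≠ a → z ≠ b → (τ * swap a b) z = τ z := fun z hza hzb => by
    rw [Perm.mul_apply, swap_apply_of_ne_of_ne hza hzb]
  have hτ : ∀ z, z ≠ b → τ z ≠ b := fun z hz h => hz (τ.injective (h.trans hb.symm))
  constructor
  · intro h
    let π : α → α := update id b a
    have hπ : ∀ {z}, z ≠ b → π z = z := fun hz => update_of_ne hz _ _
    have hπb : π b = a := update_self ..
    suffices τ.SameCycle (π x) (π y) by rwa [hπ hx, hπ hy] at this
    refine sameCycle_map π (fun z => ?_) h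
    rcases eq_or_ne z b with rfl | hzb
    · rw [hb', hπb, hπ (hτ a hab), Perm.sameCycle_apply_right]
    rcases eq_or_ne z a with rfl | hza
    · rw [ha, hπb, hπ hab]
    · rw [hne z hza hzb, hπ hzb, hπ (hτ z hzb), Perm.sameCycle_apply_right]
  · refine sameCycle_map id fun z => ?_
    rcases eq_or_ne z b with rfl | hzb
    · exact hb.symm.sameCycle _
    rcases eq_or_ne z a with rfl | hza
    · exact ⟨2, by simp [sq, hb]⟩
    · rw [id, id, ← hne z hza hzb, Perm.sameCycle_apply_right]

theorem sameCycle_mul_swap_self [DecidableEq α] {τ : Perm α} {a b : α} (hb : τ b = b) :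
    (τ * swap a b).SameCycle a b := ⟨1, by simp [hb]⟩

theorem minimalPeriod_mul_swap_self [Finite α] [DecidableEq α] {τ : Perm α} {a b : α}
    (hb : τ b = b) (hab : a ≠ b) :
    minimalPeriod (τ * swap a b) a = minimalPeriod τ a + 1 := by
  have := Fintype.ofFinite α
  have hbτ : ¬τ.SameCycle a b := fun h => hab (h.eq_of_right hb)
  rw [minimalPeriod_eq_card_sameCycle, minimalPeriod_eq_card_sameCycle,
    ← Finset.card_insert_of_notMem (a := b) (by simpa using hbτ)]
  congr 1
  ext y
  rcases eq_or_ne y b with rfl | hy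
  · simp [sameCycle_mul_swap_self hb]
  · simp [hy, sameCycle_mul_swap_iff hb hab hab hy]

theorem minimalPeriod_mul_swap_of_not_sameCycle [Finite α] [DecidableEq α] {τ : Perm α}
    {a b x : α} (hb : τ b = b) (hab : a ≠ b) (hxb : x ≠ b) (hxa : ¬τ.SameCycle x a) :
    minimalPeriod (τ * swap a b) x = minimalPeriod τ x := by
  have := Fintype.ofFinite α
  rw [minimalPeriod_eq_card_sameCycle, minimalPeriod_eq_card_sameCycle]
  congr 1
  ext y
  rcases eq_or_ne y b with rfl | hy
  · have hσ : ¬(τ * swap a y).SameCycle x y := fun h =>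
      hxa ((sameCycle_mul_swap_iff hb hab hxb hab).1 (h.trans (sameCycle_mul_swap_self hb).symm))
    have hτ : ¬τ.SameCycle x y := fun h => hxb (h.eq_of_right hb)
    simp [hσ, hτ]
  · simp [sameCycle_mul_swap_iff hb hab hxb hy]

variable [LinearOrder α] [Fintype α]

/-- The least elements of the cycles of a permutation `σ` of `S`; permutations of `S` are encoded as
permutations of `α` fixing the complement of `S`. -/
noncomputable def cycleMins (S : Finset α) (σ : Perm α) : Finset α :=
  {x ∈ S | ∀ y ∈ S, σ.SameCycle x y → x ≤ y}

theorem mem_cycleMins {S : Finset α} {σ : Perm α} {x : α} :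
    x ∈ cycleMins S σ ↔ x ∈ S ∧ ∀ y ∈ S, σ.SameCycle x y → x ≤ y := Finset.mem_filter

/-- The lengths of the cycles of a permutation `σ` of `S`, in increasing order of the least elements
of the cycles. This is the analogue of `gop`, with the same encoding as in `cycleMins`. -/
noncomputable def cyclePattern (S : Finset α) (σ : Perm α) : List ℕ :=
  (cycleMins S σ).sort.map (minimalPeriod σ)

theorem cyclePattern_congr {S : Finset α} {σ τ : Perm α}
    (hcycle : ∀ x ∈ S, ∀ y ∈ S, σ.SameCycle x y ↔ τ.SameCycle x y)
    (hperiod : ∀ x ∈ S, minimalPeriod σ x = minimalPeriod τ x) :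
    cyclePattern S σ = cyclePattern S τ := by
  have hmins : cycleMins S σ = cycleMins S τ :=
    Finset.filter_congr fun x hx => forall₂_congr fun y hy => by rw [hcycle x hx y hy]
  rw [cyclePattern, hmins]
  refine List.map_congr_left fun x hx => hperiod x ?_
  exact (mem_cycleMins.1 ((Finset.mem_sort _).1 hx)).1

theorem cyclePattern_eq_cons {S : Finset α} {a : α} (ha : IsLeast (S : Set α) a) (σ : Perm α) :
    cyclePattern S σ = minimalPeriod σ a :: cyclePattern {x ∈ S | ¬σ.SameCycle x a} σ := by
  have hmins : cycleMins S σ = insert a (cycleMins {x ∈ S | ¬σ.SameCycle x a} σ) := by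
    ext x
    simp only [mem_cycleMins, Finset.mem_filter, Finset.mem_insert]
    constructor
    · rintro ⟨hxS, hx⟩
      rcases eq_or_ne x a with rfl | hxa
      · exact .inl rfl
      · exact .inr ⟨⟨hxS, fun h => hxa ((hx a ha.1 h).antisymm (ha.2 hxS))⟩,
          fun y hy => hx y hy.1⟩
    · rintro (rfl | ⟨⟨hxS, hxa⟩, hx⟩)
      · exact ⟨ha.1, fun y hy _ => ha.2 hy⟩
      · exact ⟨hxS, fun y hy hxy => hx y ⟨hy, fun hya => hxa (hxy.trans hya)⟩ hxy⟩
  have hle : ∀ x ∈ cycleMins {x ∈ S | ¬σ.SameCycle x a} σ, a ≤ x := fun x hx =>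
    ha.2 (Finset.mem_of_mem_filter x (mem_cycleMins.1 hx).1)
  have hnotMem : a ∉ cycleMins {x ∈ S | ¬σ.SameCycle x a} σ := by
    simp [mem_cycleMins, Perm.SameCycle.rfl]
  rw [cyclePattern, hmins, Finset.sort_insert _ hle hnotMem, List.map_cons, cyclePattern]

theorem cyclePattern_eq_one_cons {S : Finset α} {a : α} {σ : Perm α} (ha : IsLeast (S : Set α) a)
    (hσ : σ a = a) : cyclePattern S σ = 1 :: cyclePattern (S.erase a) σ := by
  have hS : ({x ∈ S | ¬σ.SameCycle x a} : Finset α) = S.erase a := by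
    ext x
    have hxa : σ.SameCycle x a ↔ x = a := ⟨fun h => h.eq_of_right hσ, fun h => h.sameCycle σ⟩
    simp [hxa, and_comm]
  rw [cyclePattern_eq_cons ha, minimalPeriod_eq_one_iff_isFixedPt.2 hσ, hS]

theorem cyclePattern_mul_swap_eq_cons_iff {S : Finset α} {a b : α} {τ : Perm α}
    (ha : IsLeast (S : Set α) a) (hb : τ b = b) (hab : a ≠ b) {w : ℕ} {L : List ℕ} :
    cyclePattern S (τ * swap a b) = (w + 1) :: L ↔ cyclePattern (S.erase b) τ = w :: L := by
  have haS : IsLeast (S.erase b : Set α) a :=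
    ⟨by simpa [hab] using ha.1, fun x hx => ha.2 (Finset.mem_of_mem_erase hx)⟩
  have hS : ({x ∈ S | ¬(τ * swap a b).SameCycle x a} : Finset α) =
      {x ∈ S.erase b | ¬τ.SameCycle x a} := by
    ext x
    rcases eq_or_ne x b with rfl | hx
    · simp [(sameCycle_mul_swap_self hb).symm]
    · simp [hx, sameCycle_mul_swap_iff hb hab hx hab]
  have hmem : ∀ x ∈ ({x ∈ S.erase b | ¬τ.SameCycle x a} : Finset α),
      x ≠ b ∧ ¬τ.SameCycle x a := by
    simp +contextual
  have htail : cyclePattern {x ∈ S.erase b | ¬τ.SameCycle x a} (τ * swap a b) =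
      cyclePattern {x ∈ S.erase b | ¬τ.SameCycle x a} τ :=
    cyclePattern_congr
      (fun x hx y hy => sameCycle_mul_swap_iff hb hab (hmem x hx).1 (hmem y hy).1)
      fun x hx => minimalPeriod_mul_swap_of_not_sameCycle hb hab (hmem x hx).1 (hmem x hx).2
  rw [cyclePattern_eq_cons ha, cyclePattern_eq_cons haS, minimalPeriod_mul_swap_self hb hab, hS,
    htail]
  simp only [List.cons.injEq, Nat.add_right_cancel_iff]

open Finset Nat

/-- The permutations of `S` with cycle pattern `L`, encoded as in `cycleMins`. -/
noncomputable def permsWithPattern (S : Finset α) (L : List ℕ) : Finset (Perm α) :=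
  {σ | (∀ x ∉ S, σ x = x) ∧ cyclePattern S σ = L}

theorem mem_permsWithPattern {S : Finset α} {L : List ℕ} {σ : Perm α} :
    σ ∈ permsWithPattern S L ↔ (∀ x ∉ S, σ x = x) ∧ cyclePattern S σ = L := mem_filter_univ _

/-- The product of the sums of the nonempty suffixes of a list: the number of permutations with
cycle pattern `L` is `(L.sum)!` divided by this product. -/
def suffixSumProd : List ℕ → ℕ
  | [] => 1
  | w :: L => (w + L.sum) * suffixSumProd L

theorem permsWithPattern_one_cons {S : Finset α} {a : α} (ha : IsLeast (S : Set α) a)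
    (L : List ℕ) : permsWithPattern S (1 :: L) = permsWithPattern (S.erase a) L := by
  ext σ
  simp only [mem_permsWithPattern, mem_erase, not_and_or, not_not, or_imp,
    forall_and, forall_eq]
  constructor
  · rintro ⟨hσ, hL⟩
    have hσa : σ a = a := by
      rw [cyclePattern_eq_cons ha] at hL
      exact minimalPeriod_eq_one_iff_isFixedPt.1 (List.cons.inj hL).1
    exact ⟨⟨hσa, hσ⟩, (List.cons.inj ((cyclePattern_eq_one_cons ha hσa).symm.trans hL)).2⟩
  · rintro ⟨⟨hσa, hσ⟩, hL⟩
    exact ⟨hσ, by rw [cyclePattern_eq_one_cons ha hσa, hL]⟩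

theorem mul_swap_mem_permsWithPattern_iff {S : Finset α} {a b : α} (ha : IsLeast (S : Set α) a)
    (hb : b ∈ S) (hab : a ≠ b) (w : ℕ) (L : List ℕ) (τ : Perm α) :
    (τ * swap a b ∈ permsWithPattern S ((w + 1) :: L) ∧ (τ * swap a b) a = b) ↔
      τ ∈ permsWithPattern (S.erase b) (w :: L) := by
  have hfix : ∀ x ∉ S, (τ * swap a b) x = τ x := fun x hx => by
    rw [Perm.mul_apply, swap_apply_of_ne_of_ne] <;> rintro rfl
    exacts [hx ha.1, hx hb]
  simp only [mem_permsWithPattern, mem_erase, not_and_or, not_not, or_imp,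
    forall_and, forall_eq, Perm.mul_apply τ, swap_apply_left]
  constructor
  · rintro ⟨⟨hσ, hL⟩, hτb⟩
    exact ⟨⟨hτb, fun x hx => (hfix x hx).symm.trans (hσ x hx)⟩,
      (cyclePattern_mul_swap_eq_cons_iff ha hτb hab).1 hL⟩
  · rintro ⟨⟨hτb, hτ⟩, hL⟩
    exact ⟨⟨fun x hx => (hfix x hx).trans (hτ x hx),
      (cyclePattern_mul_swap_eq_cons_iff ha hτb hab).2 hL⟩, hτb⟩

theorem card_permsWithPattern_add_two_cons {S : Finset α} {a : α} (ha : IsLeast (S : Set α) a)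
    (w : ℕ) (L : List ℕ) : #(permsWithPattern S ((w + 2) :: L)) =
      ∑ b ∈ S.erase a, #(permsWithPattern (S.erase b) ((w + 1) :: L)) := by
  have hmaps : ∀ σ ∈ permsWithPattern S ((w + 2) :: L), σ a ∈ S.erase a := by
    intro σ hσ
    obtain ⟨hσ, hL⟩ := mem_permsWithPattern.1 hσ
    rw [cyclePattern_eq_cons ha] at hL
    have hne : σ a ≠ a := fun h => by
      have hone : minimalPeriod σ a = 1 := minimalPeriod_eq_one_iff_isFixedPt.2 h
      have hlen : minimalPeriod σ a = w + 2 := (List.cons.inj hL).1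
      omega
    exact mem_erase.2 ⟨hne, by_contra fun h => hne (σ.injective (hσ _ h))⟩
  rw [card_eq_sum_card_fiberwise hmaps]
  refine sum_congr rfl fun b hb => (card_equiv (Equiv.mulRight (swap a b)) fun τ => ?_).symm
  rw [mem_filter, Equiv.coe_mulRight]
  exact (mul_swap_mem_permsWithPattern_iff ha (mem_of_mem_erase hb) (ne_of_mem_erase hb).symm
    _ _ _).symm

theorem permsWithPattern_empty_cons (w : ℕ) (L : List ℕ) :
    permsWithPattern (∅ : Finset α) (w :: L) = ∅ := by
  simp [permsWithPattern, cyclePattern, cycleMins]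

theorem card_permsWithPattern_cons_mul {L : List ℕ} {c : ℕ}
    (hL : ∀ S : Finset α, #(permsWithPattern S L) * c = if #S = L.sum then (L.sum)! else 0)
    (w : ℕ) (S : Finset α) : #(permsWithPattern S ((w + 1) :: L)) * c =
      if #S = w + 1 + L.sum then (w + L.sum)! else 0 := by
  induction w generalizing S with
  | zero =>
    rcases S.eq_empty_or_nonempty with rfl | hS
    · simp [permsWithPattern_empty_cons, eq_comm (a := 0)]
    have ha := S.isLeast_min' hS
    rw [zero_add, zero_add, permsWithPattern_one_cons ha, hL, card_erase_of_mem ha.1]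
    exact if_congr (by have := hS.card_pos; omega) rfl rfl
  | succ w ih =>
    rcases S.eq_empty_or_nonempty with rfl | hS
    · simp [permsWithPattern_empty_cons, eq_comm (a := 0)]
    have ha := S.isLeast_min' hS
    rw [card_permsWithPattern_add_two_cons ha, sum_mul]
    calc ∑ b ∈ S.erase (S.min' hS), #(permsWithPattern (S.erase b) ((w + 1) :: L)) * c
        = ∑ _b ∈ S.erase (S.min' hS), if #S - 1 = w + 1 + L.sum then (w + L.sum)! else 0 :=
          sum_congr rfl fun b hb => by rw [ih, card_erase_of_mem (mem_of_mem_erase hb)]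
      _ = (#S - 1) * if #S - 1 = w + 1 + L.sum then (w + L.sum)! else 0 := by
          rw [sum_const, card_erase_of_mem ha.1, smul_eq_mul]
      _ = if #S = w + 1 + 1 + L.sum then (w + 1 + L.sum)! else 0 := by
          rw [add_right_comm w 1, factorial_succ, mul_ite, mul_zero]
          have := hS.card_pos
          split_ifs <;> grind

theorem card_permsWithPattern_mul_suffixSumProd {L : List ℕ} (hL : ∀ w ∈ L, 0 < w)
    (S : Finset α) : #(permsWithPattern S L) * suffixSumProd L =
      if #S = L.sum then (L.sum)! else 0 := by
  induction L generalizing S with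
  | nil =>
    rcases S.eq_empty_or_nonempty with rfl | hS
    · have hone : permsWithPattern (∅ : Finset α) [] = {1} := by
        ext σ
        simp [permsWithPattern, cyclePattern, cycleMins, Equiv.ext_iff]
      simp [hone, suffixSumProd]
    · have ha := S.isLeast_min' hS
      simp [permsWithPattern, suffixSumProd, cyclePattern_eq_cons ha, hS.ne_empty]
  | cons w L ih =>
    have hL' := (List.forall_mem_cons.1 hL).2
    obtain ⟨w, rfl⟩ := Nat.exists_eq_succ_of_ne_zero (hL w List.mem_cons_self).ne'
    rw [suffixSumProd, mul_left_comm, card_permsWithPattern_cons_mul (ih hL'), List.sum_cons,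
      mul_ite, mul_zero, succ_eq_add_one, add_right_comm, factorial_succ]

end Permutations

section Forest

open Function Set

variable {α : Type*}

theorem exists_iterate_mem_of_eqOn_compl {f g : α → α} {A : Set α} (h : EqOn f g Aᶜ) {k : ℕ} {x : α}
    (hk : f^[k] x ∈ A) : ∃ j, g^[j] x ∈ A ∧ g^[j] x = f^[j] x := by
  induction k generalizing x with
  | zero => exact ⟨0, hk, rfl⟩
  | succ k ih =>
    by_cases hx : x ∈ A
    · exact ⟨0, hx, rfl⟩
    obtain ⟨j, hj, heq⟩ := ih hk
    refine ⟨j + 1, ?_⟩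
    rw [iterate_succ_apply, iterate_succ_apply, ← h hx]
    exact ⟨hj, heq⟩

theorem periodicPts_subset_of_mapsTo {f : α → α} {A : Set α} (hA : MapsTo f A A)
    (hreach : ∀ x, ∃ k, f^[k] x ∈ A) : periodicPts f ⊆ A := by
  rintro x ⟨n, hn, hx⟩
  obtain ⟨k, hk⟩ := hreach x
  have hle : k ≤ k * n := Nat.le_mul_of_pos_right k hn
  have hreturn : f^[k * n - k] (f^[k] x) = x := by
    rw [← iterate_add_apply, Nat.sub_add_cancel hle]
    exact hx.const_mul k
  exact hreturn ▸ hA.iterate _ hk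

theorem exists_iterate_mem_periodicPts [Finite α] (f : α → α) (x : α) :
    ∃ k, f^[k] x ∈ periodicPts f := by
  obtain ⟨k, l, hkl, heq⟩ := (Set.finite_univ (α := α)).exists_lt_map_eq_of_forall_mem
    (f := fun n => f^[n] x) fun _ => Set.mem_univ _
  refine ⟨k, mk_mem_periodicPts (n := l - k) (by omega) ?_⟩
  rw [IsPeriodicPt, IsFixedPt, ← iterate_add_apply, Nat.sub_add_cancel hkl.le]
  exact heq.symm

/-- `p` is the parent map of a rooted forest; the roots are the points that are their own parent. -/
def IsRootedForest (p : α → α) : Prop := ∀ x, ∃ k, p^[k] x ∈ fixedPoints p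

/-- The forest underlying `f`, encoded by its parent map: the roots are the periodic points of `f`,
and every root is its own parent. -/
noncomputable def rootedForest (f : α → α) (x : α) : α := if x ∈ periodicPts f then x else f x

theorem eqOn_rootedForest (f : α → α) : EqOn f (rootedForest f) (periodicPts f)ᶜ :=
  fun _ hx => (if_neg hx).symm

theorem fixedPoints_rootedForest (f : α → α) : fixedPoints (rootedForest f) = periodicPts f := by
  ext x
  by_cases hx : x ∈ periodicPts f
  · exact iff_of_true (if_pos hx) hx
  · refine iff_of_false (fun h => hx ?_) hx
    exact mk_mem_periodicPts one_pos ((eqOn_rootedForest f hx).trans h)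

theorem isRootedForest_rootedForest [Finite α] (f : α → α) :
    IsRootedForest (rootedForest f) := by
  intro x
  rw [fixedPoints_rootedForest]
  obtain ⟨k, hk⟩ := exists_iterate_mem_periodicPts f x
  obtain ⟨j, hj, -⟩ := exists_iterate_mem_of_eqOn_compl (eqOn_rootedForest f) hk
  exact ⟨j, hj⟩

/-- The map obtained from the forest `p` by letting `σ` permute its roots. -/
noncomputable def permuteRoots (p : α → α) (σ : Equiv.Perm (fixedPoints p)) (x : α) : α :=
  if hx : x ∈ fixedPoints p then σ ⟨x, hx⟩ else p x

theorem permuteRoots_coe (p : α → α) (σ : Equiv.Perm (fixedPoints p)) (x : fixedPoints p) :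
    permuteRoots p σ x = σ x := dif_pos x.2

theorem permuteRoots_of_notMem {p : α → α} (σ : Equiv.Perm (fixedPoints p)) {x : α}
    (hx : x ∉ fixedPoints p) : permuteRoots p σ x = p x := dif_neg hx

theorem periodicPts_permuteRoots [Finite α] {p : α → α} (hp : IsRootedForest p)
    (σ : Equiv.Perm (fixedPoints p)) : periodicPts (permuteRoots p σ) = fixedPoints p := by
  apply Subset.antisymm
  · refine periodicPts_subset_of_mapsTo
      (fun x hx => permuteRoots_coe p σ ⟨x, hx⟩ ▸ (σ ⟨x, hx⟩).2) fun x => ?_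
    obtain ⟨k, hk⟩ := hp x
    obtain ⟨j, hj, -⟩ := exists_iterate_mem_of_eqOn_compl
      (fun x hx => (permuteRoots_of_notMem σ hx).symm) hk
    exact ⟨j, hj⟩
  · intro x hx
    have hsemi : Semiconj Subtype.val σ (permuteRoots p σ) :=
      fun x => (permuteRoots_coe p σ x).symm
    exact hsemi.mapsTo_periodicPts (σ.injective.mem_periodicPts ⟨x, hx⟩)

theorem rootedForest_permuteRoots [Finite α] {p : α → α} (hp : IsRootedForest p)
    (σ : Equiv.Perm (fixedPoints p)) : rootedForest (permuteRoots p σ) = p := by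
  ext x
  rw [rootedForest, periodicPts_permuteRoots hp]
  split_ifs with hx
  · exact hx.symm
  · exact permuteRoots_of_notMem σ hx

/-- A map with forest `p` amounts to a permutation of the roots of `p`. -/
noncomputable def forestFiberEquiv [Finite α] {p : α → α} (hp : IsRootedForest p) :
    {g : α → α // rootedForest g = p} ≃ Equiv.Perm (fixedPoints p) where
  toFun g := BijOn.equiv g.1 <| by
    obtain ⟨g, rfl⟩ := g
    rw [fixedPoints_rootedForest]
    exact bijOn_periodicPts g
  invFun σ := ⟨permuteRoots p σ, rootedForest_permuteRoots hp σ⟩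
  left_inv := by
    rintro ⟨g, rfl⟩
    ext x
    by_cases hx : x ∈ fixedPoints (rootedForest g)
    · exact permuteRoots_coe _ _ ⟨x, hx⟩
    · refine (permuteRoots_of_notMem _ hx).trans ?_
      rw [fixedPoints_rootedForest] at hx
      exact (eqOn_rootedForest g hx).symm
  right_inv σ := by
    ext x
    exact permuteRoots_coe p σ x

end Forest

section Components

open Function Set

variable {N : ℕ} {f : Fin N → Fin N} {x y z : Fin N}

theorem sameComp.refl (f : Fin N → Fin N) (x : Fin N) : sameComp f x x := ⟨0, 0, rfl⟩

theorem sameComp.symm (h : sameComp f x y) : sameComp f y x :=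
  let ⟨k, l, h⟩ := h
  ⟨l, k, h.symm⟩

theorem sameComp.trans (hxy : sameComp f x y) (hyz : sameComp f y z) : sameComp f x z := by
  obtain ⟨k, l, hkl⟩ := hxy
  obtain ⟨m, n, hmn⟩ := hyz
  refine ⟨m + k, l + n, ?_⟩
  rw [iterate_add_apply, hkl, iterate_add_apply, ← hmn, ← iterate_add_apply, ← iterate_add_apply,
    add_comm]

theorem sameComp_iterate (f : Fin N → Fin N) (k : ℕ) (x : Fin N) : sameComp f x (f^[k] x) :=
  ⟨k, 0, rfl⟩

theorem gopOrd_eq_minimalPeriod {k : ℕ} (hk : f^[k] x ∈ periodicPts f) :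
    gopOrd f x = minimalPeriod f (f^[k] x) := by
  have hset : {p | 0 < p ∧ ∃ K, f^[K + p] x = f^[K] x} =
      {p | 0 < p ∧ IsPeriodicPt f p (f^[k] x)} := by
    ext p
    refine and_congr_right fun _ => ⟨fun ⟨K, hK⟩ => ?_, fun h => ⟨k, ?_⟩⟩
    · refine isPeriodicPt_of_mem_periodicPts_of_isPeriodicPt_iterate hk (n := K) ?_
      rw [← iterate_add_apply, add_comm, iterate_add_apply]
      refine IsPeriodicPt.apply_iterate ?_ k
      rwa [IsPeriodicPt, IsFixedPt, ← iterate_add_apply, add_comm]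
    · rwa [add_comm, iterate_add_apply]
  rw [gopOrd, hset]
  have hmin : minimalPeriod f (f^[k] x) ∈ {p | 0 < p ∧ IsPeriodicPt f p (f^[k] x)} :=
    ⟨minimalPeriod_pos_of_mem_periodicPts hk, isPeriodicPt_minimalPeriod ..⟩
  exact (Nat.sInf_le hmin).antisymm
    (le_csInf ⟨_, hmin⟩ fun p hp => IsPeriodicPt.minimalPeriod_le hp.1 hp.2)

theorem pos_of_mem_gop {w : ℕ} (hw : w ∈ gop f) : 0 < w := by
  obtain ⟨x, -, rfl⟩ := List.mem_map.1 hw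
  obtain ⟨k, hk⟩ := exists_iterate_mem_periodicPts f x
  rw [gopOrd_eq_minimalPeriod hk]
  exact minimalPeriod_pos_of_mem_periodicPts hk

/-- The least element of the component of `x`. -/
noncomputable def compMin (f : Fin N → Fin N) (x : Fin N) : Fin N :=
  ({y | sameComp f x y} : Finset (Fin N)).min' ⟨x, by simpa using sameComp.refl f x⟩

/-- The least elements of the components of `f`; these index the entries of `gop f`. -/
noncomputable def compMins (f : Fin N → Fin N) : Finset (Fin N) :=
  {x | ∀ y, sameComp f x y → x ≤ y}

theorem sameComp_compMin (f : Fin N → Fin N) (x : Fin N) : sameComp f x (compMin f x) :=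
  (Finset.mem_filter_univ _).1 (Finset.min'_mem {y | sameComp f x y} _)

theorem compMin_le (h : sameComp f x y) : compMin f x ≤ y :=
  Finset.min'_le _ _ (by simpa using h)

theorem compMin_eq_compMin_iff : compMin f x = compMin f y ↔ sameComp f x y := by
  constructor
  · intro h
    exact (sameComp_compMin f x).trans (h ▸ (sameComp_compMin f y).symm)
  · intro h
    exact (compMin_le (h.trans (sameComp_compMin f y))).antisymm
      (compMin_le (h.symm.trans (sameComp_compMin f x)))

theorem mem_compMins : x ∈ compMins f ↔ compMin f x = x := by
  rw [compMins, Finset.mem_filter_univ]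
  exact ⟨fun h => (compMin_le (sameComp.refl f x)).antisymm (h _ (sameComp_compMin f x)),
    fun h y hy => h ▸ compMin_le hy⟩

theorem compMin_mem_compMins (f : Fin N → Fin N) (x : Fin N) : compMin f x ∈ compMins f :=
  mem_compMins.2 (compMin_eq_compMin_iff.2 (sameComp_compMin f x).symm)

theorem injOn_compMin_fixedPoints (f : Fin N → Fin N) : InjOn (compMin f) (fixedPoints f) := by
  intro x hx y hy h
  obtain ⟨k, l, hkl⟩ := compMin_eq_compMin_iff.1 h
  rwa [iterate_fixed hx, iterate_fixed hy] at hkl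

theorem bijOn_compMin_fixedPoints {p : Fin N → Fin N} (hp : IsRootedForest p) :
    BijOn (compMin p) (fixedPoints p) (compMins p) := by
  refine ⟨fun x _ => compMin_mem_compMins p x, injOn_compMin_fixedPoints p, fun x hx => ?_⟩
  obtain ⟨k, hk⟩ := hp x
  refine ⟨p^[k] x, hk, ?_⟩
  rw [compMin_eq_compMin_iff.2 (sameComp_iterate p k x).symm, mem_compMins.1 hx]

/-- `σ` permutes the trees of the forest of `g` in the same way as `g`, where each tree is
represented by its least element. -/
def IsTreePerm (g : Fin N → Fin N) (σ : Equiv.Perm (Fin N)) : Prop :=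
  ∀ x ∈ periodicPts g, σ (compMin (rootedForest g) x) = compMin (rootedForest g) (g x)

theorem exists_iterate_mem_periodicPts_compMin_eq (g : Fin N → Fin N) (x : Fin N) :
    ∃ k, g^[k] x ∈ periodicPts g ∧
      compMin (rootedForest g) (g^[k] x) = compMin (rootedForest g) x := by
  obtain ⟨k, hk⟩ := isRootedForest_rootedForest g x
  rw [fixedPoints_rootedForest] at hk
  obtain ⟨j, hj, heq⟩ := exists_iterate_mem_of_eqOn_compl (eqOn_rootedForest g).symm hk
  exact ⟨j, hj, heq ▸ compMin_eq_compMin_iff.2 (sameComp_iterate _ j x).symm⟩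

variable {g : Fin N → Fin N} {σ : Equiv.Perm (Fin N)}

theorem IsTreePerm.iterate_compMin (hσ : IsTreePerm g σ) (hx : x ∈ periodicPts g) (n : ℕ) :
    σ^[n] (compMin (rootedForest g) x) = compMin (rootedForest g) (g^[n] x) := by
  induction n with
  | zero => rfl
  | succ n ih =>
    rw [iterate_succ_apply', ih, hσ _ ((bijOn_periodicPts g).mapsTo.iterate n hx),
      iterate_succ_apply']

theorem injOn_compMin_periodicPts (g : Fin N → Fin N) :
    InjOn (compMin (rootedForest g)) (periodicPts g) :=
  fixedPoints_rootedForest g ▸ injOn_compMin_fixedPoints (rootedForest g)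

theorem IsTreePerm.sameComp_iff (hσ : IsTreePerm g σ) : sameComp g x y ↔
    σ.SameCycle (compMin (rootedForest g) x) (compMin (rootedForest g) y) := by
  obtain ⟨i, hi, hxi⟩ := exists_iterate_mem_periodicPts_compMin_eq g x
  obtain ⟨j, hj, hyj⟩ := exists_iterate_mem_periodicPts_compMin_eq g y
  rw [← hxi, ← hyj]
  constructor
  · intro h
    obtain ⟨k, l, hkl⟩ := ((sameComp_iterate g i x).symm.trans h).trans (sameComp_iterate g j y)
    have heq : (σ ^ k) (compMin (rootedForest g) (g^[i] x)) =
        (σ ^ l) (compMin (rootedForest g) (g^[j] y)) := by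
      rw [Equiv.Perm.coe_pow, Equiv.Perm.coe_pow, hσ.iterate_compMin hi, hσ.iterate_compMin hj, hkl]
    rw [← Equiv.Perm.sameCycle_pow_left (n := k), heq, Equiv.Perm.sameCycle_pow_left]
  · intro h
    obtain ⟨n, hn⟩ := h.exists_nat_pow_eq
    rw [Equiv.Perm.coe_pow, hσ.iterate_compMin hi] at hn
    have heq : g^[n] (g^[i] x) = g^[j] y := injOn_compMin_periodicPts g
      ((bijOn_periodicPts g).mapsTo.iterate n hi) hj hn
    refine ⟨n + i, j, ?_⟩
    rwa [iterate_add_apply]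

theorem IsTreePerm.gopOrd_eq (hσ : IsTreePerm g σ) (x : Fin N) :
    gopOrd g x = minimalPeriod σ (compMin (rootedForest g) x) := by
  obtain ⟨k, hk, hxk⟩ := exists_iterate_mem_periodicPts_compMin_eq g x
  rw [gopOrd_eq_minimalPeriod hk, ← hxk, minimalPeriod_eq_minimalPeriod_iff]
  intro n
  rw [IsPeriodicPt, IsPeriodicPt, IsFixedPt, IsFixedPt, hσ.iterate_compMin hk,
    (injOn_compMin_periodicPts g).eq_iff ((bijOn_periodicPts g).mapsTo.iterate n hk) hk]

/-- A component of `g` is a union of trees, so its least element is that of one of its trees. -/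
theorem IsTreePerm.gop_eq (hσ : IsTreePerm g σ) :
    gop g = cyclePattern (compMins (rootedForest g)) σ := by
  have hmins : compMins g = cycleMins (compMins (rootedForest g)) σ := by
    ext x
    rw [compMins, Finset.mem_filter_univ, mem_cycleMins]
    constructor
    · intro hx
      have hxmin : compMin (rootedForest g) x = x :=
        (compMin_le (sameComp.refl _ x)).antisymm <| hx _ <| hσ.sameComp_iff.2 <| by
          rw [mem_compMins.1 (compMin_mem_compMins _ x)]
      refine ⟨mem_compMins.2 hxmin, fun y hy hxy => hx y (hσ.sameComp_iff.2 ?_)⟩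
      rwa [hxmin, mem_compMins.1 hy]
    · rintro ⟨hxS, hx⟩ y hxy
      rw [hσ.sameComp_iff, mem_compMins.1 hxS] at hxy
      exact (hx _ (compMin_mem_compMins _ y) hxy).trans (compMin_le (sameComp.refl _ y))
  change (compMins g).sort.map (gopOrd g) = _
  rw [hmins, cyclePattern]
  refine List.map_congr_left fun x hx => ?_
  have hxS := (mem_cycleMins.1 ((Finset.mem_sort _).1 hx)).1
  rw [hσ.gopOrd_eq, mem_compMins.1 hxS]

end Components

section Counting

open Function Finset Nat

variable {N : ℕ}

/-- The equivalence `forestFiberEquiv`, with each root replaced by the least element of its tree. -/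
noncomputable def forestFiberEquivPerm {p : Fin N → Fin N} (hp : IsRootedForest p) :
    {g : Fin N → Fin N // rootedForest g = p} ≃
      {σ : Equiv.Perm (Fin N) // ∀ x ∉ compMins p, σ x = x} :=
  ((forestFiberEquiv hp).trans (bijOn_compMin_fixedPoints hp).equiv.permCongr).trans
    (Equiv.Perm.subtypeEquivSubtypePerm (· ∈ compMins p))

theorem isTreePerm_forestFiberEquivPerm {p : Fin N → Fin N} (hp : IsRootedForest p)
    (g : {g : Fin N → Fin N // rootedForest g = p}) :
    IsTreePerm g.1 (forestFiberEquivPerm hp g).1 := by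
  obtain ⟨g, rfl⟩ := g
  intro x hx
  rw [← fixedPoints_rootedForest] at hx
  let e := (bijOn_compMin_fixedPoints hp).equiv
  have hex : e.symm ⟨_, compMin_mem_compMins _ x⟩ = ⟨x, hx⟩ := e.symm_apply_apply ⟨x, hx⟩
  refine (Equiv.Perm.ofSubtype_apply_of_mem _ (compMin_mem_compMins _ x)).trans ?_
  rw [Equiv.trans_apply, Equiv.permCongr_apply, hex]
  rfl

theorem card_gop_eq_card_permsWithPattern {p : Fin N → Fin N} (hp : IsRootedForest p) (L : List ℕ) :
    #{g : Fin N → Fin N | gop g = L ∧ rootedForest g = p} = #(permsWithPattern (compMins p) L) := by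
  let e := forestFiberEquivPerm hp
  have hgop : ∀ g, gop g.1 = cyclePattern (compMins p) (e g).1 := fun g => by
    rw [(isTreePerm_forestFiberEquivPerm hp g).gop_eq, g.2]
  refine card_bij (fun g hg => (e ⟨g, (mem_filter.1 hg).2.2⟩).1) (fun g hg => ?_)
    (fun g _ g' _ h => congrArg Subtype.val (e.injective (Subtype.ext h))) fun σ hσ => ?_
  · exact mem_permsWithPattern.2 ⟨(e _).2, (hgop _).symm.trans (mem_filter.1 hg).2.1⟩
  · obtain ⟨hσ, hL⟩ := mem_permsWithPattern.1 hσ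
    refine ⟨(e.symm ⟨σ, hσ⟩).1, (mem_filter_univ _).2 ⟨?_, (e.symm ⟨σ, hσ⟩).2⟩, ?_⟩
    · rw [hgop, e.apply_symm_apply, hL]
    · rw [Subtype.coe_eta, e.apply_symm_apply]

theorem card_rootedForest_eq {p : Fin N → Fin N} (hp : IsRootedForest p) :
    #{g : Fin N → Fin N | rootedForest g = p} = (#(compMins p))! := by
  rw [← Fintype.card_subtype, Fintype.card_congr (forestFiberEquivPerm hp),
    ← Fintype.card_congr (Equiv.Perm.subtypeEquivSubtypePerm (· ∈ compMins p)),
    Fintype.card_perm, Fintype.card_coe]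

theorem card_gop_mul_suffixSumProd {L : List ℕ} (hL : ∀ w ∈ L, 0 < w) :
    #{f : Fin N → Fin N | gop f = L} * suffixSumProd L =
      #{f : Fin N → Fin N | #(compMins (rootedForest f)) = L.sum} := by
  have hmaps : ∀ s : Finset (Fin N → Fin N), ∀ f ∈ s, rootedForest f ∈ univ.image rootedForest :=
    fun _ f _ => mem_image_of_mem _ (mem_univ f)
  rw [card_eq_sum_card_fiberwise (hmaps _), card_eq_sum_card_fiberwise (hmaps _), sum_mul]
  refine sum_congr rfl fun p hp => ?_
  obtain ⟨f, -, rfl⟩ := mem_image.1 hp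
  have hf := isRootedForest_rootedForest f
  rw [filter_filter, card_gop_eq_card_permsWithPattern hf,
    card_permsWithPattern_mul_suffixSumProd hL, filter_filter]
  split_ifs with h
  · rw [← h, ← card_rootedForest_eq hf]
    refine congrArg card (filter_congr fun g _ => ?_)
    exact ⟨fun hg => ⟨by rw [hg], hg⟩, And.right⟩
  · refine (card_eq_zero.2 (filter_eq_empty_iff.2 fun g _ hg => h ?_)).symm
    rw [← hg.2, hg.1]

theorem suffixSumProd_pos {L : List ℕ} (hL : ∀ w ∈ L, 0 < w) : 0 < suffixSumProd L := by
  induction L with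
  | nil => exact one_pos
  | cons w L ih =>
    rw [List.forall_mem_cons] at hL
    exact Nat.mul_pos (Nat.add_pos_left hL.1 _) (ih hL.2)

theorem suffixSumProd_append_cons_cons (L₁ L₂ : List ℕ) (a b : ℕ) :
    suffixSumProd (L₁ ++ a :: b :: L₂) =
      (b + L₂.sum) * suffixSumProd (L₁ ++ (a + b) :: L₂) := by
  induction L₁ with
  | nil => simp only [List.nil_append, suffixSumProd, List.sum_cons]; ring
  | cons w L₁ ih =>
    simp only [List.cons_append, suffixSumProd, ih, List.sum_append, List.sum_cons, add_assoc]
    ring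

end Counting

/-- let `[ω_1, …, ω_p] = L₁ ++ [w] ++ L₂` be a global orbit pattern realized
in `F_N` with `w = ω_j ≥ 2`, and let `1 ≤ h ≤ w − 1`. Then the number of `f ∈ F_N` with
`gop f = L₁ ++ [w] ++ L₂` equals `(h + ω_{j+1} + ⋯ + ω_p)` times the number of `f ∈ F_N`
with `gop f = L₁ ++ [w − h, h] ++ L₂`. -/
theorem card_gop_split (N : ℕ) (L₁ L₂ : List ℕ) (w h : ℕ) (hw : 2 ≤ w)
    (hh : 1 ≤ h) (hhw : h ≤ w - 1)
    (hreal : ∃ f : Fin N → Fin N, gop f = L₁ ++ [w] ++ L₂) :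
    Nat.card {f : Fin N → Fin N // gop f = L₁ ++ [w] ++ L₂}
      = (h + L₂.sum) *
        Nat.card {f : Fin N → Fin N // gop f = L₁ ++ [w - h, h] ++ L₂} := by
  obtain ⟨f, hf⟩ := hreal
  obtain ⟨v, hv, rfl⟩ : ∃ v, 0 < v ∧ w = v + h := ⟨w - h, by omega, by omega⟩
  have hL : ∀ u ∈ L₁ ++ [v + h] ++ L₂, 0 < u := fun u hu => pos_of_mem_gop (hf ▸ hu)
  have hL' : ∀ u ∈ L₁ ++ [v, h] ++ L₂, 0 < u := by
    simp only [List.mem_append, List.mem_cons] at hL ⊢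
    grind
  have hsum : (L₁ ++ [v, h] ++ L₂).sum = (L₁ ++ [v + h] ++ L₂).sum := by simp [add_assoc]
  have hprod : suffixSumProd (L₁ ++ [v, h] ++ L₂) =
      (h + L₂.sum) * suffixSumProd (L₁ ++ [v + h] ++ L₂) := by
    simpa using suffixSumProd_append_cons_cons L₁ L₂ v h
  have hcard := (card_gop_mul_suffixSumProd (N := N) hL).trans
    (hsum ▸ (card_gop_mul_suffixSumProd hL').symm)
  rw [hprod] at hcard
  rw [Nat.add_sub_cancel, Nat.card_eq_fintype_card, Nat.card_eq_fintype_card, Fintype.card_subtype,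
    Fintype.card_subtype]
  apply Nat.eq_of_mul_eq_mul_right (suffixSumProd_pos hL)
  rw [hcard]
  ring
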